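/- Let K be a number field of degree n over ℚ, with ring of integers O_K and D_K the absolute value of its discriminant, and suppose K is either totally real or totally complex (a CM field); let ¯ : K → K be the identity in the first case and complex conjugation in the second. Let α be a totally positive element of the fixed field of this involution, and define q_α(x,y) = Tr_{K/ℚ}(α·x·ȳ), extended ℝ-bilinearly to K⊗ℝ. Let det(O_K,q_α) denote the determinant of the Gram matrix of q_α in a ℤ-basis of O_K, and suppose μ > 0 is such that for every x ∈ K⊗ℝ there exists c ∈ O_K with q_α(x−c,x−c) ≤ μ. Then M(K) ≤ (μ / (n · det(O_K,q_α)^{1/n}))^{n/2} · √(D_K). -/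

import Mathlib

open NumberField
open scoped TensorProduct

/-- The Euclidean minimum of a number field `K`:
`M(K) = sup_{x ∈ K} inf_{c ∈ O_K} |N_{K/ℚ}(x − c)|`. -/
noncomputable def euclideanMinimum (K : Type*) [Field K] [NumberField K] : ℝ :=
  ⨆ x : K, ⨅ c : 𝓞 K, |((Algebra.norm ℚ (x - (c : K)) : ℚ) : ℝ)|

/-- The twisted trace form `q_α(x, y) = Tr_{K/ℚ}(α · x · σ(y))`. -/
noncomputable def qAlpha (K : Type*) [Field K] [NumberField K]
    (σ : K ≃ₐ[ℚ] K) (α : K) : K →ₗ[ℚ] K →ₗ[ℚ] ℚ :=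
  LinearMap.compl₁₂ (Algebra.traceForm ℚ K) (LinearMap.mulLeft ℚ α) σ.toLinearMap

/-- The determinant of the Gram matrix of a bilinear form `B` on `K` with respect to
a ℤ-basis of the ring of integers of `K`. -/
noncomputable def gramDet (K : Type*) [Field K] [NumberField K]
    (B : K →ₗ[ℚ] K →ₗ[ℚ] ℚ) : ℚ :=
  letI := Classical.decEq (Module.Free.ChooseBasisIndex ℤ (𝓞 K))
  (Matrix.of fun i j => B (RingOfIntegers.basis K i) (RingOfIntegers.basis K j)).det

/-!
Each embedding `φ : K → ℂ` turns `σ` into complex conjugation, so that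
`q_α(y, y) = ∑ φ, φ(α) ‖φ(y)‖²` is a sum of `n` nonnegative terms whose product is
`N(α) N(y)²`. The inequality of arithmetic and geometric means therefore gives
`N(α) N(y)² ≤ (q_α(y, y) / n) ^ n`, to be applied to `y = x - c`. On the other hand the Gram matrix
of `q_α` factors as `M * diag(φ(α)) * Mᴴ` with `M` the matrix of embeddings of an integral basis,
and `(det M)² = disc K`; hence `det(O_K, q_α) = N(α) D_K`, which eliminates `N(α)`.
-/

theorem prod_le_sum_div_card_pow {ι : Type*} [Fintype ι] {z : ι → ℝ} (hz : ∀ i, 0 ≤ z i) :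
    ∏ i, z i ≤ ((∑ i, z i) / Fintype.card ι) ^ Fintype.card ι := by
  cases isEmpty_or_nonempty ι
  · simp
  have prod_nonneg : 0 ≤ ∏ i, z i := Finset.prod_nonneg fun i _ => hz i
  have geom_le_arith : (∏ i, z i) ^ (Fintype.card ι : ℝ)⁻¹ ≤ (∑ i, z i) / Fintype.card ι := by
    simpa using Real.geom_mean_le_arith_mean Finset.univ (fun _ => 1) z
      (fun _ _ => zero_le_one) (by simp [Fintype.card_pos]) (fun i _ => hz i)
  calc ∏ i, z i = ((∏ i, z i) ^ (Fintype.card ι : ℝ)⁻¹) ^ Fintype.card ι :=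
        (Real.rpow_inv_natCast_pow prod_nonneg Fintype.card_ne_zero).symm
    _ ≤ ((∑ i, z i) / Fintype.card ι) ^ Fintype.card ι := by gcongr

theorem rpow_half_mul_sqrt_eq_sqrt_pow_div {n : ℕ} (hn : n ≠ 0) {μ A D : ℝ} (hμ : 0 ≤ μ)
    (hA : 0 ≤ A) (hD : 0 < D) :
    (μ / (n * (A * D) ^ (1 / n : ℝ))) ^ (n / 2 : ℝ) * √D = √((μ / n) ^ n / A) := by
  have pow_eq : (μ / (n * (A * D) ^ (1 / n : ℝ))) ^ n = (μ / n) ^ n / (A * D) := by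
    rw [← div_div, div_pow, one_div, Real.rpow_inv_natCast_pow (by positivity) hn]
  rw [div_eq_mul_one_div (n : ℝ) 2, Real.rpow_natCast_mul (by positivity), ← Real.sqrt_eq_rpow,
    pow_eq, ← Real.sqrt_mul (by positivity), ← div_div, div_mul_cancel₀ _ hD.ne']

section NumberField

variable {K : Type*} [Field K]

/-- Total positivity of `α`, the condition making `q_α` positive definite. Every complex embedding
is required to send `α` to a positive real number, so complex places are not exempt. -/
def IsTotallyPositive (α : K) : Prop :=
  ∀ φ : K →+* ℂ, 0 < (φ α).re ∧ (φ α).im = 0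

theorem IsTotallyPositive.apply_eq_norm {α : K} (hα : IsTotallyPositive α) {F : Type*}
    [FunLike F K ℂ] [RingHomClass F K ℂ] (φ : F) : φ α = ‖φ α‖ := by
  obtain ⟨re_pos, im_eq_zero⟩ := hα φ
  exact Complex.eq_coe_norm_of_nonneg (Complex.nonneg_iff.mpr ⟨re_pos.le, im_eq_zero.symm⟩)

variable [NumberField K]

/-- The canonical involution of a totally real field (the identity) or of a CM field (complex
conjugation), with respect to which `q_α` is Hermitian. It is characterised by becoming complex
conjugation under every embedding into `ℂ`. -/
def IsCanonicalInvolution (σ : K ≃ₐ[ℚ] K) : Prop :=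
  ∀ φ : K →+* ℂ, ∀ x : K, φ (σ x) = starRingEnd ℂ (φ x)

theorem abs_norm_eq_prod_norm_embeddings (x : K) :
    |((Algebra.norm ℚ x : ℚ) : ℝ)| = ∏ φ : K →ₐ[ℚ] ℂ, ‖φ x‖ := by
  rw [← norm_prod, ← Algebra.norm_eq_prod_embeddings, eq_ratCast, Complex.norm_ratCast]

namespace IsTotallyPositive

variable {α : K}

theorem norm_eq_prod_norm_embeddings (hα : IsTotallyPositive α) :
    ((Algebra.norm ℚ α : ℚ) : ℝ) = ∏ φ : K →ₐ[ℚ] ℂ, ‖φ α‖ := by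
  have h := Algebra.norm_eq_prod_embeddings ℚ ℂ α
  rw [eq_ratCast, Finset.prod_congr rfl fun φ _ => hα.apply_eq_norm φ] at h
  exact_mod_cast h

theorem norm_pos (hα : IsTotallyPositive α) : 0 < Algebra.norm ℚ α := by
  have hpos : (0 : ℝ) < Algebra.norm ℚ α := by
    rw [hα.norm_eq_prod_norm_embeddings]
    refine Finset.prod_pos fun φ _ => norm_pos_iff.mpr fun h0 => ?_
    simpa [h0] using (hα φ).1
  exact_mod_cast hpos

end IsTotallyPositive

section TwistedTraceForm

variable {σ : K ≃ₐ[ℚ] K}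

theorem qAlpha_eq_sum_embeddings (hσ : IsCanonicalInvolution σ) (α x y : K) :
    (qAlpha K σ α x y : ℂ) = ∑ φ : K →ₐ[ℚ] ℂ, φ α * (φ x * starRingEnd ℂ (φ y)) := by
  have qAlpha_eq_trace : qAlpha K σ α x y = Algebra.trace ℚ K (α * (x * σ y)) := by
    simp [qAlpha, Algebra.traceForm_apply, mul_assoc]
  rw [qAlpha_eq_trace, ← eq_ratCast (algebraMap ℚ ℂ), trace_eq_sum_embeddings ℂ]
  refine Finset.sum_congr rfl fun φ _ => ?_
  rw [map_mul, map_mul, show φ (σ y) = starRingEnd ℂ (φ y) from hσ φ y]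

theorem qAlpha_self_eq_sum_norm (hσ : IsCanonicalInvolution σ) {α : K}
    (hα : IsTotallyPositive α) (y : K) :
    (qAlpha K σ α y y : ℝ) = ∑ φ : K →ₐ[ℚ] ℂ, ‖φ α‖ * ‖φ y‖ ^ 2 := by
  have term_eq (φ : K →ₐ[ℚ] ℂ) :
      φ α * (φ y * starRingEnd ℂ (φ y)) = ((‖φ α‖ * ‖φ y‖ ^ 2 : ℝ) : ℂ) := by
    rw [Complex.mul_conj', Complex.ofReal_mul, Complex.ofReal_pow, ← hα.apply_eq_norm φ]
  have h := qAlpha_eq_sum_embeddings hσ α y y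
  rw [Finset.sum_congr rfl fun φ _ => term_eq φ] at h
  exact_mod_cast h

theorem qAlpha_self_nonneg (hσ : IsCanonicalInvolution σ) {α : K}
    (hα : IsTotallyPositive α) (y : K) :
    0 ≤ qAlpha K σ α y y := by
  have h : (0 : ℝ) ≤ qAlpha K σ α y y := by
    rw [qAlpha_self_eq_sum_norm hσ hα]
    positivity
  exact_mod_cast h

theorem norm_mul_norm_sq_le_qAlpha_div_finrank_pow (hσ : IsCanonicalInvolution σ)
    {α : K} (hα : IsTotallyPositive α) (y : K) :
    Algebra.norm ℚ α * Algebra.norm ℚ y ^ 2 ≤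
      (qAlpha K σ α y y / Module.finrank ℚ K) ^ Module.finrank ℚ K := by
  have amgm := prod_le_sum_div_card_pow fun φ : K →ₐ[ℚ] ℂ =>
    mul_nonneg (norm_nonneg (φ α)) (sq_nonneg ‖φ y‖)
  rw [Finset.prod_mul_distrib, Finset.prod_pow, ← hα.norm_eq_prod_norm_embeddings,
    ← abs_norm_eq_prod_norm_embeddings, sq_abs, ← qAlpha_self_eq_sum_norm hσ hα,
    AlgHom.card] at amgm
  exact_mod_cast amgm

theorem abs_norm_le_of_qAlpha_self_le (hσ : IsCanonicalInvolution σ) {α : K}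
    (hα : IsTotallyPositive α) {μ : ℝ} {y : K} (hy : qAlpha K σ α y y ≤ μ) :
    |((Algebra.norm ℚ y : ℚ) : ℝ)| ≤
      √((μ / Module.finrank ℚ K) ^ Module.finrank ℚ K / (Algebra.norm ℚ α : ℚ)) := by
  have hq : (0 : ℝ) ≤ qAlpha K σ α y y := by exact_mod_cast qAlpha_self_nonneg hσ hα y
  have hN : (0 : ℝ) < Algebra.norm ℚ α := by exact_mod_cast hα.norm_pos
  refine Real.abs_le_sqrt ((le_div_iff₀' hN).mpr ?_)
  calc (Algebra.norm ℚ α * Algebra.norm ℚ y ^ 2 : ℝ)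
      ≤ (qAlpha K σ α y y / Module.finrank ℚ K) ^ Module.finrank ℚ K := by
        exact_mod_cast norm_mul_norm_sq_le_qAlpha_div_finrank_pow hσ hα y
    _ ≤ (μ / Module.finrank ℚ K) ^ Module.finrank ℚ K := by gcongr

section Gram

variable {ι : Type*} [Fintype ι] [DecidableEq ι]

theorem gram_qAlpha_eq_mul_diagonal_mul_conjTranspose (hσ : IsCanonicalInvolution σ)
    (α : K) (b : ι → K) (e : ι ≃ (K →ₐ[ℚ] ℂ)) :
    (Matrix.of fun i j => qAlpha K σ α (b i) (b j)).map (algebraMap ℚ ℂ) =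
      Algebra.embeddingsMatrixReindex ℚ ℂ b e * Matrix.diagonal (fun k => e k α) *
        (Algebra.embeddingsMatrixReindex ℚ ℂ b e).conjTranspose := by
  ext i j
  rw [Matrix.map_apply, Matrix.of_apply, eq_ratCast, qAlpha_eq_sum_embeddings hσ, ← e.sum_comp,
    Matrix.mul_apply]
  simp [Algebra.embeddingsMatrixReindex, mul_left_comm, mul_assoc]

theorem det_gram_qAlpha (hσ : IsCanonicalInvolution σ) (α : K) (b : ι → K)
    (hι : Fintype.card ι = Module.finrank ℚ K) :
    (Matrix.of fun i j => qAlpha K σ α (b i) (b j)).det =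
      Algebra.norm ℚ α * |Algebra.discr ℚ b| := by
  let e : ι ≃ (K →ₐ[ℚ] ℂ) := Fintype.equivOfCardEq (by rw [hι, AlgHom.card])
  let M := Algebra.embeddingsMatrixReindex ℚ ℂ b e
  have norm_eq : ∏ k, e k α = (Algebra.norm ℚ α : ℂ) := by
    rw [e.prod_comp (fun φ => φ α), ← Algebra.norm_eq_prod_embeddings, eq_ratCast]
  have abs_discr_eq : ((|Algebra.discr ℚ b| : ℚ) : ℝ) = ‖M.det‖ ^ 2 := by
    rw [← norm_pow, ← Algebra.discr_eq_det_embeddingsMatrixReindex_pow_two, eq_ratCast,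
      Complex.norm_ratCast, Rat.cast_abs]
  have det_eq : (((Matrix.of fun i j => qAlpha K σ α (b i) (b j)).det : ℚ) : ℂ) =
      Algebra.norm ℚ α * (|Algebra.discr ℚ b| : ℚ) :=
    calc _ = (M * Matrix.diagonal (fun k => e k α) * M.conjTranspose).det := by
          rw [← eq_ratCast (algebraMap ℚ ℂ), RingHom.map_det, RingHom.mapMatrix_apply,
            gram_qAlpha_eq_mul_diagonal_mul_conjTranspose hσ]
      _ = (∏ k, e k α) * (M.det * starRingEnd ℂ M.det) := by
          rw [Matrix.det_mul, Matrix.det_mul, Matrix.det_diagonal, Matrix.det_conjTranspose,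
            mul_right_comm, mul_comm, starRingEnd_apply]
      _ = Algebra.norm ℚ α * (|Algebra.discr ℚ b| : ℚ) := by
          rw [norm_eq, Complex.mul_conj', ← Complex.ofReal_pow, ← abs_discr_eq,
            Complex.ofReal_ratCast]
  exact_mod_cast det_eq

end Gram

theorem gramDet_qAlpha (hσ : IsCanonicalInvolution σ) (α : K) :
    gramDet K (qAlpha K σ α) = Algebra.norm ℚ α * |(discr K : ℚ)| := by
  classical
  rw [coe_discr, ← det_gram_qAlpha hσ α (integralBasis K)
    (Module.finrank_eq_card_basis (integralBasis K)).symm]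
  simp only [gramDet, integralBasis_apply]

end TwistedTraceForm

theorem euclideanMinimum_le {B : ℝ}
    (hB : ∀ x : K, ∃ c : 𝓞 K, |((Algebra.norm ℚ (x - (c : K)) : ℚ) : ℝ)| ≤ B) :
    euclideanMinimum K ≤ B :=
  ciSup_le fun x =>
    have ⟨c, hc⟩ := hB x
    ciInf_le_of_le ⟨0, Set.forall_mem_range.mpr fun _ => abs_nonneg _⟩ c hc

end NumberField

theorem euclideanMinimum_le_of_coveringBound_general
    (K : Type*) [Field K] [NumberField K]
    (σ : K ≃ₐ[ℚ] K) (hσ : IsCanonicalInvolution σ)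
    (α : K) (hα : IsTotallyPositive α) (μ : ℝ)
    (hμ : ∀ x : K, ∃ c : 𝓞 K, (qAlpha K σ α (x - (c : K)) (x - (c : K)) : ℝ) ≤ μ) :
    euclideanMinimum K ≤
      (μ / ((Module.finrank ℚ K : ℝ) *
          (gramDet K (qAlpha K σ α) : ℝ) ^ ((1 : ℝ) / (Module.finrank ℚ K : ℝ)))) ^
        ((Module.finrank ℚ K : ℝ) / 2) *
      Real.sqrt |(NumberField.discr K : ℝ)| := by
  have hN : (0 : ℝ) < Algebra.norm ℚ α := by exact_mod_cast hα.norm_pos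
  have hD : 0 < |(discr K : ℝ)| := abs_pos.mpr (by exact_mod_cast discr_ne_zero K)
  have hμ_nonneg : 0 ≤ μ := by
    obtain ⟨c, hc⟩ := hμ 0
    exact le_trans (by exact_mod_cast qAlpha_self_nonneg hσ hα _) hc
  have gramDet_eq : (gramDet K (qAlpha K σ α) : ℝ) = Algebra.norm ℚ α * |(discr K : ℝ)| := by
    exact_mod_cast gramDet_qAlpha hσ α
  rw [gramDet_eq, rpow_half_mul_sqrt_eq_sqrt_pow_div Module.finrank_pos.ne' hμ_nonneg hN.le hD]
  exact euclideanMinimum_le fun x =>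
    (hμ x).imp fun _ hc => abs_norm_le_of_qAlpha_self_le hσ hα hc

theorem euclideanMinimum_le_of_coveringBound
    (K : Type*) [Field K] [NumberField K]
    -- `σ` is the identity if `K` is totally real and complex conjugation if `K` is a CM field;
    -- the existence of such a `σ` forces `K` to be totally real or totally complex (CM)
    (σ : K ≃ₐ[ℚ] K)
    (hσ : ∀ φ : K →+* ℂ, ∀ x : K, φ (σ x) = starRingEnd ℂ (φ x))
    -- `α` is a totally positive element of the fixed field of `σ`
    (α : K) (hα : σ α = α)
    (hαpos : ∀ φ : K →+* ℂ, 0 < (φ α).re ∧ (φ α).im = 0)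
    (μ : ℝ) (hμpos : 0 < μ)
    -- `max(O_K, q_α) ≤ μ` for the ℝ-bilinear extension of `q_α` to `K ⊗ ℝ`
    (hμ : ∀ x : ℝ ⊗[ℚ] K, ∃ c : 𝓞 K,
      (LinearMap.BilinForm.baseChange ℝ (qAlpha K σ α))
          (x - (1 : ℝ) ⊗ₜ[ℚ] (c : K)) (x - (1 : ℝ) ⊗ₜ[ℚ] (c : K)) ≤ μ) :
    euclideanMinimum K ≤
      (μ / ((Module.finrank ℚ K : ℝ) *
          (gramDet K (qAlpha K σ α) : ℝ) ^ ((1 : ℝ) / (Module.finrank ℚ K : ℝ)))) ^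
        ((Module.finrank ℚ K : ℝ) / 2) *
      Real.sqrt |(NumberField.discr K : ℝ)| := by
  refine euclideanMinimum_le_of_coveringBound_general K σ hσ α hαpos μ fun x => ?_
  simpa [← TensorProduct.tmul_sub, Rat.smul_def] using hμ (1 ⊗ₜ[ℚ] x)
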